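/- arXiv:0806.3583 — 10 statements merged into one kernel-verified Lean document; each statement's English description precedes it below -/
import Mathlib

section
/- Fix integers b ≥ 2, n ≥ 1, m ≥ 1 and targets i_1,…,i_m ∈ {0,…,n−1}. Then the number of digit arrays C : {1,…,m}×{1,…,n} → {0,…,b−1} whose carry sequence satisfies κ_j(C) = i_j for all 1 ≤ j ≤ m equals the number of digit arrays A : {1,…,m}×{1,…,n} → {0,…,b−1} such that, writing A_j for the j-th column of A and τ_j = π(A_j)∘π(A_{j−1})∘⋯∘π(A_1), one has d(τ_j) = i_j for all 1 ≤ j ≤ m. (Equivalently, when all digits are i.i.d. uniform on {0,…,b−1}, the joint distribution of the carries (κ_1,…,κ_m) in base-b addition of n random numbers equals the joint distribution of the descent numbers (d(τ_1),…,d(τ_m)) under m successive b-shuffles.) -/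
/-- The ranking permutation (0-indexed): `rank v i` is the number of positions `i'`
whose value is smaller than `v i`, or equal to `v i` but occurring earlier.  This labels
the entries from smallest to largest, breaking ties by position. -/
def rank {n : ℕ} {α : Type*} [LinearOrder α] (v : Fin n → α) (i : Fin n) : Fin n :=
  ⟨(Finset.univ.filter fun i' => v i' < v i ∨ (v i' = v i ∧ i' < i)).card, by
    calc (Finset.univ.filter fun i' => v i' < v i ∨ (v i' = v i ∧ i' < i)).card
        ≤ (Finset.univ.erase i).card := by
          apply Finset.card_le_card
          intro x hx
          rw [Finset.mem_filter] at hx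
          rw [Finset.mem_erase]
          refine ⟨?_, Finset.mem_univ x⟩
          rintro rfl
          rcases hx.2 with h | h
          · exact lt_irrefl _ h
          · exact lt_irrefl _ h.2
      _ < Finset.univ.card := Finset.card_erase_lt_of_mem (Finset.mem_univ i)
      _ = n := by simp⟩

/-- The number of descents of a map `σ : Fin n → Fin n`:
the number of indices `i` with `σ (i+1) < σ i`. -/
noncomputable def descents {n : ℕ} (σ : Fin n → Fin n) : ℕ :=
  Nat.card {i : Fin n // ∃ h : i.1 + 1 < n, σ ⟨i.1 + 1, h⟩ < σ i}

/-- The carries when adding the `n` numbers whose base-`b` digits are the rows of `C`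
(column `s`, entry `t`): `carry C 0 = 0` and
`carry C (s+1) = ⌊(carry C s + Σ_t C s t) / b⌋`. -/
def carry {b n m : ℕ} (C : Fin m → Fin n → Fin b) : ℕ → ℕ
  | 0 => 0
  | s + 1 =>
      if h : s < m then (carry C s + ∑ t, (C ⟨s, h⟩ t : ℕ)) / b
      else carry C s

/-- `tau A j` is the composition `π(A_j) ∘ ⋯ ∘ π(A_1)` of the ranking permutations of the
first `j` columns of `A` (columns `0,…,j-1` in 0-indexed notation). -/
def tau {b n m : ℕ} (A : Fin m → Fin n → Fin b) : ℕ → (Fin n → Fin n)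
  | 0 => id
  | s + 1 => if h : s < m then rank (A ⟨s, h⟩) ∘ tau A s else tau A s

/-!
Read the rows of a digit array as numbers `x t < b ^ m`. The carry out of the first `s` columns is
`⌊(∑ t, x t % b ^ s) / b ^ s⌋`, and a quotient of a sum counts the wraparounds of the running sum:
it is the number of descents of the sequence `y t % b ^ s`, where `y t` is the residue of
`x 0 + ⋯ + x t` modulo `b ^ m`. Passing from `x` to `y` is a bijection.

On the other side, composing rankings is radix sort: if column `s` of `A` lists the `s`-th digits
of `y` after the rows have been stably sorted by their lower digits, then `tau A s` is the ranking
of the sequence `y t % b ^ s`, which has the same descents as that sequence. Passing from `y` to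
`A` is again a bijection, and it does not depend on `s`.
-/

open Finset

section Rank

variable {n : ℕ} {α β : Type*} [LinearOrder α] [LinearOrder β]

theorem val_rank (v : Fin n → α) (i : Fin n) :
    (rank v i : ℕ) = #{j | toLex (v j, j) < toLex (v i, i)} := by
  simp only [rank, Prod.Lex.toLex_lt_toLex]

theorem rank_lt_rank_iff {v : Fin n → α} {i k : Fin n} :
    rank v i < rank v k ↔ toLex (v i, i) < toLex (v k, k) := by
  rw [Fin.lt_def, val_rank, val_rank]
  constructor
  · contrapose!
    exact fun hki => card_le_card (monotone_filter_right _ fun j _ hj => hj.trans_le hki)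
  · intro hik
    refine card_lt_card ((ssubset_iff_of_subset ?_).mpr ⟨i, by simpa using hik, by simp⟩)
    exact monotone_filter_right _ fun j _ hj => hj.trans hik

theorem rank_injective (v : Fin n → α) : Function.Injective (rank v) := by
  intro i k hik
  have hkey : toLex (v i, i) = toLex (v k, k) :=
    le_antisymm (not_lt.mp fun h => (rank_lt_rank_iff.mpr h).ne' hik)
      (not_lt.mp fun h => (rank_lt_rank_iff.mpr h).ne hik)
  exact congrArg Prod.snd (toLex.injective hkey)

/-- The ranking `rank v` bundled as a permutation, so that it can be inverted. -/
noncomputable def rankPerm (v : Fin n → α) : Equiv.Perm (Fin n) :=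
  Equiv.ofBijective (rank v) (Finite.injective_iff_bijective.mp (rank_injective v))

theorem coe_rankPerm (v : Fin n → α) : ⇑(rankPerm v) = rank v := rfl

theorem rank_congr {v : Fin n → α} {w : Fin n → β} (h : ∀ i j, v i < v j ↔ w i < w j) :
    rank v = rank w := by
  have heq (i j : Fin n) : v i = v j ↔ w i = w j := by
    simp only [eq_iff_le_not_lt, ← not_lt, h]
  funext i
  simp only [rank, h, heq]

theorem rank_const (a : α) : rank (fun _ : Fin n => a) = id := by
  funext i
  refine Fin.ext ?_
  simp [rank, filter_gt_eq_Iio]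

theorem rank_comp_rank (u : Fin n → β) (v : Fin n → α) :
    rank u ∘ rank v = rank fun i => toLex (u (rank v i), v i) := by
  funext i
  refine Fin.ext ?_
  rw [Function.comp_apply, val_rank, val_rank]
  refine (card_equiv (rankPerm v) fun j => ?_).symm
  simp only [mem_filter, mem_univ, true_and, coe_rankPerm, Prod.Lex.toLex_lt_toLex,
    rank_lt_rank_iff, EmbeddingLike.apply_eq_iff_eq, Prod.mk.injEq]
  tauto

theorem descents_eq_card (σ : Fin (n + 1) → Fin (n + 1)) :
    descents σ = #{i : Fin n | σ i.succ < σ i.castSucc} := by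
  classical
  rw [descents, Nat.card_eq_fintype_card, Fintype.card_subtype, card_filter, card_filter,
    Fin.sum_univ_castSucc]
  simp [Fin.succ]

theorem descents_rank (w : Fin (n + 1) → α) :
    descents (rank w) = #{i : Fin n | w i.succ < w i.castSucc} := by
  simp [descents_eq_card, rank_lt_rank_iff, Prod.Lex.toLex_lt_toLex,
    Fin.castSucc_lt_succ.not_gt]

end Rank

section PrefixSums

/-- The partial sums of `x` over the initial segments `Iic t`; on `Fin n` these are
`x 0 + ⋯ + x t`. -/
def prefixSums {ι G : Type*} [Preorder ι] [LocallyFiniteOrderBot ι] [AddCommMonoid G]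
    (x : ι → G) (t : ι) : G :=
  ∑ k ∈ Iic t, x k

theorem prefixSums_injective {ι G : Type*} [PartialOrder ι] [LocallyFiniteOrderBot ι]
    [WellFoundedLT ι] [AddCancelCommMonoid G] :
    Function.Injective (prefixSums : (ι → G) → ι → G) := by
  intro x y hxy
  funext t
  induction t using WellFoundedLT.induction with
  | ind t ih =>
    have hbelow : ∑ k ∈ Iio t, x k = ∑ k ∈ Iio t, y k :=
      sum_congr rfl fun k hk => ih k (mem_Iio.mp hk)
    have ht : prefixSums x t = prefixSums y t := congrFun hxy t
    rw [prefixSums, prefixSums, ← sum_Iio_add_eq_sum_Iic, ← sum_Iio_add_eq_sum_Iic, hbelow] at ht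
    exact add_left_cancel ht

variable {n : ℕ} {G : Type*} [AddCommMonoid G]

theorem prefixSums_zero (x : Fin (n + 1) → G) : prefixSums x 0 = x 0 := by
  have : (Iic 0 : Finset (Fin (n + 1))) = {0} := Iic_bot
  rw [prefixSums, this, sum_singleton]

theorem prefixSums_succ (x : Fin (n + 1) → G) (i : Fin n) :
    prefixSums x i.succ = prefixSums x i.castSucc + x i.succ := by
  have hIio : Iio i.succ = Iic i.castSucc := by
    ext k
    rw [mem_Iio, mem_Iic, Fin.le_castSucc_iff]
  rw [prefixSums, ← sum_Iio_add_eq_sum_Iic, hIio, prefixSums]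

theorem prefixSums_last (x : Fin (n + 1) → G) : prefixSums x (Fin.last n) = ∑ t, x t := by
  rw [prefixSums, ← Fin.top_eq_last, Iic_top]

theorem fin_val_sum {ι : Type*} {N : ℕ} [NeZero N] (s : Finset ι) (x : ι → Fin N) :
    (∑ k ∈ s, x k).val = (∑ k ∈ s, (x k : ℕ)) % N := by
  classical
  induction s using Finset.induction_on with
  | empty => simp
  | insert k s hk ih => rw [sum_insert hk, sum_insert hk, Fin.val_add, ih, Nat.add_mod_mod]

theorem val_prefixSums_mod {ι : Type*} [Preorder ι] [LocallyFiniteOrderBot ι] {N M : ℕ}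
    [NeZero N] (hMN : M ∣ N) (x : ι → Fin N) (t : ι) :
    (prefixSums x t).val % M = prefixSums (fun k => (x k : ℕ) % M) t % M := by
  rw [prefixSums, prefixSums, fin_val_sum, Nat.mod_mod_of_dvd _ hMN, sum_nat_mod]

end PrefixSums

section Wraparound

theorem add_div_eq_div_add_ite_mod_lt {M S x : ℕ} (hx : x < M) :
    (S + x) / M = S / M + if (S + x) % M < S % M then 1 else 0 := by
  have hM : 0 < M := x.zero_le.trans_lt hx
  have hwrap : M ≤ S % M + x ↔ (S + x) % M < S % M := by
    rw [Nat.add_mod_eq_ite, Nat.mod_eq_of_lt hx]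
    split_ifs <;> lia
  simp only [Nat.add_div hM, Nat.div_eq_of_lt hx, Nat.mod_eq_of_lt hx, add_zero, hwrap]

theorem div_last_eq_card_mod_descents {n M : ℕ} (S : Fin (n + 1) → ℕ) (hzero : S 0 < M)
    (hstep : ∀ i : Fin n, ∃ x < M, S i.succ = S i.castSucc + x) :
    S (Fin.last n) / M = #{i : Fin n | S i.succ % M < S i.castSucc % M} := by
  induction n with
  | zero => simpa using Nat.div_eq_of_lt hzero
  | succ n ih =>
    have hinit := ih (fun i => S i.castSucc) hzero fun i => hstep i.castSucc
    obtain ⟨x, hx, hlast⟩ := hstep (Fin.last n)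
    rw [Fin.succ_last] at hlast
    rw [card_filter, Fin.sum_univ_castSucc, ← card_filter, hlast, Fin.succ_last, hlast,
      add_div_eq_div_add_ite_mod_lt hx, hinit]
    rfl

theorem sum_div_eq_descents_rank_prefixSums {n M : ℕ} (x : Fin n → ℕ) (hx : ∀ t, x t < M) :
    (∑ t, x t) / M = descents (rank fun t => prefixSums x t % M) := by
  cases n with
  | zero => simp [descents]
  | succ n =>
    rw [descents_rank, ← prefixSums_last]
    refine div_last_eq_card_mod_descents _ ?_ fun i => ⟨x i.succ, hx _, prefixSums_succ x i⟩
    rw [prefixSums_zero]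
    exact hx 0

end Wraparound

theorem toLex_div_mod_lt_iff {M x y : ℕ} :
    toLex (x / M, x % M) < toLex (y / M, y % M) ↔ x < y := by
  rw [Prod.Lex.toLex_lt_toLex]
  constructor
  · rintro (hdiv | ⟨hdiv, hmod⟩)
    · exact lt_of_not_ge fun hyx => hdiv.not_ge (Nat.div_le_div_right hyx)
    · rw [← Nat.div_add_mod x M, ← Nat.div_add_mod y M]
      exact add_lt_add_of_le_of_lt (congrArg (M * ·) hdiv).le hmod
  · intro hxy
    refine (Nat.div_le_div_right hxy.le).lt_or_eq.imp_right fun hdiv => ⟨hdiv, ?_⟩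
    rw [← Nat.div_add_mod x M, ← Nat.div_add_mod y M] at hxy
    exact lt_of_add_lt_add_left (hxy.trans_eq (congrArg (M * · + y % M) hdiv.symm))

section DigitArrays

variable {b n m : ℕ}

/-- The numbers whose base-`b` digits are the rows of a digit array, column `0` being the least
significant. -/
def rowValues : (Fin m → Fin n → Fin b) ≃ (Fin n → Fin (b ^ m)) :=
  (Equiv.piComm _).trans (Equiv.piCongrRight fun _ => finFunctionFinEquiv)

theorem digit_eq_rowValues_div_mod (D : Fin m → Fin n → Fin b) (s : Fin m) (t : Fin n) :
    (D s t : ℕ) = rowValues D t / b ^ (s : ℕ) % b := by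
  have hdigit : finFunctionFinEquiv.symm (rowValues D t) s = D s t := by
    simp [rowValues]
  rw [← hdigit]
  rfl

theorem carry_eq_sum_rowValues_mod_div [NeZero b] (C : Fin m → Fin n → Fin b) {s : ℕ}
    (hs : s ≤ m) : carry C s = (∑ t, rowValues C t % b ^ s) / b ^ s := by
  induction s with
  | zero => simp [carry, Nat.mod_one]
  | succ s ih =>
    have hmod (t : Fin n) : (rowValues C t : ℕ) % b ^ (s + 1) =
        rowValues C t % b ^ s + b ^ s * C ⟨s, hs⟩ t := by
      rw [Nat.mod_pow_succ, digit_eq_rowValues_div_mod]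
    rw [carry, dif_pos (Nat.lt_of_succ_le hs), ih (Nat.le_of_succ_le hs),
      sum_congr rfl fun t _ => hmod t, sum_add_distrib, ← mul_sum, pow_succ,
      ← Nat.div_div_eq_div_mul, Nat.add_mul_div_left _ _ (NeZero.pos (b ^ s))]

theorem carry_eq_descents_rank_prefixSums [NeZero b] (C : Fin m → Fin n → Fin b) {s : ℕ}
    (hs : s ≤ m) :
    carry C s = descents (rank fun t => (prefixSums (rowValues C) t).val % b ^ s) := by
  have hlt (t : Fin n) : (rowValues C t : ℕ) % b ^ s < b ^ s := Nat.mod_lt _ (NeZero.pos _)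
  simp only [carry_eq_sum_rowValues_mod_div C hs, sum_div_eq_descents_rank_prefixSums _ hlt,
    val_prefixSums_mod (pow_dvd_pow b hs)]

/-- The columns met when the rows of `D` are radix sorted: column `s` lists the `s`-th digits of
the rows after these have been stably sorted by their first `s` digits. -/
noncomputable def radixColumns (D : Fin m → Fin n → Fin b) : Fin m → Fin n → Fin b :=
  fun s => D s ∘ (rankPerm fun t => (rowValues D t : ℕ) % b ^ (s : ℕ)).symm

theorem radixColumns_rank (D : Fin m → Fin n → Fin b) (s : Fin m) (t : Fin n) :
    radixColumns D s (rank (fun t => (rowValues D t : ℕ) % b ^ (s : ℕ)) t) = D s t := by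
  rw [radixColumns, ← coe_rankPerm, Function.comp_apply, Equiv.symm_apply_apply]

theorem tau_radixColumns (D : Fin m → Fin n → Fin b) {s : ℕ} (hs : s ≤ m) :
    tau (radixColumns D) s = rank fun t => (rowValues D t : ℕ) % b ^ s := by
  induction s with
  | zero => simp [tau, Nat.mod_one, rank_const]
  | succ s ih =>
    rw [tau, dif_pos (Nat.lt_of_succ_le hs), ih (Nat.le_of_succ_le hs), rank_comp_rank]
    refine rank_congr fun i j => ?_
    rw [← toLex_div_mod_lt_iff (M := b ^ s) (x := _ % _)]
    simp only [radixColumns_rank D ⟨s, hs⟩, pow_succ, Nat.mod_mul_right_div_self,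
      Nat.mod_mul_right_mod, Prod.Lex.toLex_lt_toLex, Fin.lt_def, Fin.ext_iff,
      digit_eq_rowValues_div_mod]

theorem radixColumns_injective :
    Function.Injective (radixColumns : (Fin m → Fin n → Fin b) → Fin m → Fin n → Fin b) := by
  have hleft : Function.LeftInverse (fun (A : Fin m → Fin n → Fin b) s t => A s (tau A s t))
      radixColumns := fun D => by
    funext s t
    dsimp only
    rw [tau_radixColumns D s.2.le, radixColumns_rank]
  exact hleft.injective

/-- The map of digit arrays turning carries into descents: replace the row values by their prefix
sums modulo `b ^ m`, the reduction being that of addition in `Fin (b ^ m)`, and radix sort. -/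
noncomputable def carriesToShuffles [NeZero b] (C : Fin m → Fin n → Fin b) :
    Fin m → Fin n → Fin b :=
  radixColumns (rowValues.symm (prefixSums (rowValues C)))

theorem carriesToShuffles_bijective [NeZero b] : Function.Bijective
    (carriesToShuffles : (Fin m → Fin n → Fin b) → Fin m → Fin n → Fin b) :=
  Finite.injective_iff_bijective.mp <| radixColumns_injective.comp <|
    rowValues.symm.injective.comp <| prefixSums_injective.comp rowValues.injective

theorem descents_tau_carriesToShuffles [NeZero b] (C : Fin m → Fin n → Fin b) {s : ℕ}
    (hs : s ≤ m) : descents (tau (carriesToShuffles C) s) = carry C s := by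
  rw [carriesToShuffles, tau_radixColumns _ hs, Equiv.apply_symm_apply,
    carry_eq_descents_rank_prefixSums C hs]

end DigitArrays

/-- **Carries and shuffling have the same joint distribution** (Theorem 2 of
Diaconis–Fulman, "Carries, Shuffling and An Amazing Matrix").
Fix `b ≥ 2`, `n ≥ 1`, `m ≥ 1` and targets `i 1,…,i m ∈ {0,…,n−1}` (0-indexed as
`i : Fin m → ℕ`).  The number of digit arrays `C` whose carries satisfy
`κ_j(C) = i j` for all `j` equals the number of digit arrays `A` such that the
compositions `τ_j = π(A_j)∘⋯∘π(A_1)` satisfy `d(τ_j) = i j` for all `j`. -/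
theorem carries_eq_descents_joint (b n m : ℕ) (hb : 2 ≤ b) (hn : 1 ≤ n) (hm : 1 ≤ m)
    (i : Fin m → ℕ) (hi : ∀ j, i j < n) :
    Nat.card {C : Fin m → Fin n → Fin b // ∀ j : Fin m, carry C (j.1 + 1) = i j} =
    Nat.card {A : Fin m → Fin n → Fin b // ∀ j : Fin m, descents (tau A (j.1 + 1)) = i j} := by
  have : NeZero b := ⟨by lia⟩
  refine Nat.card_congr ((Equiv.ofBijective _ carriesToShuffles_bijective).subtypeEquiv fun C => ?_)
  simp only [Equiv.ofBijective_apply, descents_tau_carriesToShuffles C (Fin.is_lt _)]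
end

section
/- Let M ≥ 1 be an integer, let x_1,…,x_n be integers with 0 ≤ x_t < M for all t, and set S_i = x_1 + ⋯ + x_i (with S_0 = 0). Then for every 0 ≤ i ≤ n−1, one has ⌊S_{i+1}/M⌋ = ⌊S_i/M⌋ + 1 if and only if (S_{i+1} mod M) < (S_i mod M). In other words, adding the (i+1)-st number increases the carried amount (by exactly one) precisely when the sequence of partial sums reduced mod M has a descent at position i. -/
theorem add_div_eq_div_add_div_add_one_iff {M : ℕ} (hM : 0 < M) (a b : ℕ) :
    (a + b) / M = a / M + b / M + 1 ↔ M ≤ a % M + b % M := by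
  rw [Nat.add_div hM]
  split_ifs with h_carry <;> simp [h_carry]

theorem add_mod_lt_mod_left_iff {M : ℕ} (hM : 0 < M) (a b : ℕ) :
    (a + b) % M < a % M ↔ M ≤ a % M + b % M := by
  have hb : b % M < M := Nat.mod_lt b hM
  rcases le_or_gt M (a % M + b % M) with h_carry | h_no_carry
  · have h_wrap : (a + b) % M + M = a % M + b % M := Nat.add_mod_add_of_le_add_mod h_carry
    omega
  · have h_add : (a + b) % M = a % M + b % M := Nat.add_mod_of_add_mod_lt h_no_carry
    omega

theorem carry_iff_descent_of_partial_sums_general {M : ℕ} (hM : 0 < M) (x : ℕ → ℕ) (i : ℕ) :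
    (∑ t ∈ Finset.range (i + 1), x t) / M =
        (∑ t ∈ Finset.range i, x t) / M + x i / M + 1 ↔
      (∑ t ∈ Finset.range (i + 1), x t) % M < (∑ t ∈ Finset.range i, x t) % M := by
  rw [Finset.sum_range_succ, add_div_eq_div_add_div_add_one_iff hM, add_mod_lt_mod_left_iff hM]

/-- **Carries correspond to descents of partial sums mod `M`** (Lemma 3 of
Diaconis–Fulman).  Let `x 0, …, x (n-1)` be numbers in `{0,…,M−1}` and let
`S i = x 0 + ⋯ + x (i-1)` be the partial sums.  For `i < n`, adding the `(i+1)`-st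
number increases the carried amount `⌊S i / M⌋` (necessarily by exactly one) if and
only if the partial sums reduced mod `M` have a descent at position `i`. -/
theorem carry_iff_descent_of_partial_sums (M : ℕ) (hM : 1 ≤ M) (n : ℕ) (x : ℕ → ℕ)
    (hx : ∀ t, t < n → x t < M) (i : ℕ) (hi : i < n) :
    (∑ t ∈ Finset.range (i + 1), x t) / M = (∑ t ∈ Finset.range i, x t) / M + 1 ↔
      (∑ t ∈ Finset.range (i + 1), x t) % M < (∑ t ∈ Finset.range i, x t) % M := by
  simpa only [Nat.div_eq_of_lt (hx i hi), add_zero] using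
    carry_iff_descent_of_partial_sums_general hM x i
end

section
/- Fix integers b ≥ 2, n ≥ 1 and 1 ≤ j ≤ m. When the digits of the array C are chosen independently and uniformly in {0,…,b−1}, the expected value of the j-th carry is E[κ_j] = ((n−1)/2)·(1 − 1/b^j). Equivalently, b^{−nm} · Σ_C κ_j(C) = ((n−1)/2)·(1 − b^{−j}), where the sum is over all b^{nm} digit arrays C. -/
/-!
Write `κ_s + Σ_t C(s,t) = b κ_{s+1} + r_s`, where `r_s` is the `s`-th digit of the sum of the `n`
numbers. Adding `a` modulo `b` to a single digit of column `s` adds `a` to `r_s` and leaves `κ_s`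
unchanged, so `r_s` is uniform on `{0,…,b−1}`, just like each of the `n` digits of the column.
Taking expectations, `b E[κ_{s+1}] = E[κ_s] + (n − 1)(b − 1)/2`, and the claim follows by induction.
-/

open scoped BigOperators

theorem expect_comp_of_equivariant {G Ω M : Type*} [AddGroup G] [Fintype G] [Fintype Ω]
    [Nonempty Ω] [AddCommMonoid M] [Module ℚ≥0 M] (shift : G → Equiv.Perm Ω) (f : Ω → G)
    (hf : ∀ a x, f (shift a x) = f x + a) (g : G → M) :
    𝔼 x, g (f x) = 𝔼 a, g a :=
  calc
    𝔼 x, g (f x) = 𝔼 _a : G, 𝔼 x, g (f x) := (Fintype.expect_const _).symm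
    _ = 𝔼 a, 𝔼 x, g (f x + a) := Finset.expect_congr rfl fun a _ ↦
      (Fintype.expect_equiv (shift a) _ _ fun x ↦ by rw [hf]).symm
    _ = 𝔼 x, 𝔼 a, g (f x + a) := Finset.expect_comm _ _ _
    _ = 𝔼 _x : Ω, 𝔼 a, g a := Finset.expect_congr rfl fun x _ ↦
      Fintype.expect_equiv (Equiv.addLeft (f x)) _ _ fun _ ↦ rfl
    _ = 𝔼 a, g a := Fintype.expect_const _

theorem expect_fin_val {K : Type*} [Field K] [CharZero K] (b : ℕ) [NeZero b] :
    𝔼 a : Fin b, ((a : ℕ) : K) = ((b : K) - 1) / 2 := by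
  have gauss : (∑ i ∈ Finset.range b, (i : K)) * 2 = b * ((b : K) - 1) := by
    rw [← Nat.cast_pred (NeZero.pos b), ← Nat.cast_sum]
    exact_mod_cast Finset.sum_range_id_mul_two b
  have hb : (b : K) ≠ 0 := NeZero.ne _
  rw [Fintype.expect_eq_sum_div_card, Fintype.card_fin,
    Fin.sum_univ_eq_sum_range (fun i ↦ (i : K)), div_eq_div_iff hb two_ne_zero, gauss, mul_comm]

section Carry

variable {b n m : ℕ}

theorem carry_succ (C : Fin m → Fin n → Fin b) (s : Fin m) :
    carry C (s + 1) = (carry C s + ∑ t, (C s t : ℕ)) / b := by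
  simp [carry]

theorem carry_congr {C D : Fin m → Fin n → Fin b} {s : ℕ}
    (h : ∀ i : Fin m, (i : ℕ) < s → C i = D i) : carry C s = carry D s := by
  induction s with
  | zero => rfl
  | succ s ih =>
    have ih := ih fun i hi ↦ h i (Nat.lt_succ_of_lt hi)
    simp only [carry]
    split_ifs with hs
    · rw [ih, h ⟨s, hs⟩ (Nat.lt_succ_self s)]
    · exact ih

variable [NeZero b]

/-- The digit in column `s` of the sum of the `n` numbers encoded by `C`, that is
`(carry C s + ∑ t, C s t) % b`; the addition here takes place in `Fin b`, hence modulo `b`. -/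
def sumDigit (C : Fin m → Fin n → Fin b) (s : Fin m) : Fin b :=
  Fin.ofNat b (carry C s) + ∑ t, C s t

theorem val_sumDigit (C : Fin m → Fin n → Fin b) (s : Fin m) :
    (sumDigit C s : ℕ) = (carry C s + ∑ t, (C s t : ℕ)) % b := by
  open scoped Fin.CommRing in
  have h : sumDigit C s = ((carry C s + ∑ t, (C s t : ℕ) : ℕ) : Fin b) := by
    simp [sumDigit]
  rw [h, Fin.val_natCast]

theorem mul_carry_succ_add_sumDigit (C : Fin m → Fin n → Fin b) (s : Fin m) :
    b * carry C (s + 1) + sumDigit C s = carry C s + ∑ t, (C s t : ℕ) := by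
  rw [carry_succ, val_sumDigit, Nat.div_add_mod]

theorem carry_add_single (C : Fin m → Fin n → Fin b) (s : Fin m) (x : Fin n → Fin b) :
    carry (C + Pi.single s x) s = carry C s :=
  carry_congr fun i hi ↦ by simp [Pi.single_eq_of_ne (Fin.ne_of_lt hi)]

theorem sumDigit_add_single (C : Fin m → Fin n → Fin b) (s : Fin m) (t : Fin n) (a : Fin b) :
    sumDigit (C + Pi.single s (Pi.single t a)) s = sumDigit C s + a := by
  simp [sumDigit, carry_add_single, Finset.sum_add_distrib, add_assoc]

variable {K : Type*} [Field K] [CharZero K]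

theorem expect_val_of_add_single (s : Fin m) (t : Fin n)
    (f : (Fin m → Fin n → Fin b) → Fin b)
    (hf : ∀ C a, f (C + Pi.single s (Pi.single t a)) = f C + a) :
    𝔼 C, ((f C : ℕ) : K) = ((b : K) - 1) / 2 := by
  rw [← expect_fin_val b]
  exact expect_comp_of_equivariant (fun a ↦ Equiv.addRight (Pi.single s (Pi.single t a))) f
    (fun a C ↦ hf C a) fun a ↦ ((a : ℕ) : K)

theorem expect_digit (s : Fin m) (t : Fin n) :
    𝔼 C : Fin m → Fin n → Fin b, ((C s t : ℕ) : K) = ((b : K) - 1) / 2 :=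
  expect_val_of_add_single s t (fun C ↦ C s t) fun C a ↦ by simp

variable [NeZero n]

theorem expect_sumDigit (s : Fin m) :
    𝔼 C : Fin m → Fin n → Fin b, ((sumDigit C s : ℕ) : K) = ((b : K) - 1) / 2 :=
  expect_val_of_add_single s 0 (sumDigit · s) fun C a ↦ sumDigit_add_single C s 0 a

theorem mul_expect_carry_succ (s : Fin m) :
    b * 𝔼 C : Fin m → Fin n → Fin b, (carry C (s + 1) : K) =
      𝔼 C : Fin m → Fin n → Fin b, (carry C s : K) + ((n : K) - 1) * (((b : K) - 1) / 2) := by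
  have column_sum : 𝔼 C : Fin m → Fin n → Fin b, ∑ t, ((C s t : ℕ) : K) =
      n * (((b : K) - 1) / 2) := by
    simp only [Finset.expect_sum_comm, expect_digit, Finset.sum_const, Finset.card_univ,
      Fintype.card_fin, nsmul_eq_mul]
  have division : 𝔼 C : Fin m → Fin n → Fin b, (b * carry C (s + 1) + (sumDigit C s : ℕ) : K) =
      𝔼 C : Fin m → Fin n → Fin b, (carry C s + ∑ t, ((C s t : ℕ) : K)) :=
    Finset.expect_congr rfl fun C _ ↦ by exact_mod_cast mul_carry_succ_add_sumDigit C s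
  rw [Finset.expect_add_distrib, Finset.expect_add_distrib, ← Finset.mul_expect,
    expect_sumDigit, column_sum] at division
  linear_combination division

theorem expect_carry {j : ℕ} (hj : j ≤ m) :
    𝔼 C : Fin m → Fin n → Fin b, (carry C j : K) =
      ((n : K) - 1) / 2 * (1 - 1 / (b : K) ^ j) := by
  induction j with
  | zero => simp [carry]
  | succ s ih =>
    have hb : (b : K) ≠ 0 := NeZero.ne _
    apply mul_left_cancel₀ hb
    rw [mul_expect_carry_succ ⟨s, hj⟩, ih (Nat.le_of_succ_le hj)]
    field_simp
    ring

end Carry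

/-- **Mean of the carries** (Theorem 4 of Diaconis–Fulman): when the digits of the array
`C` are i.i.d. uniform on `{0,…,b−1}`, the expected value of the `j`-th carry is
`E[κ_j] = ((n−1)/2)·(1 − 1/b^j)`. -/
theorem expected_carry (b n m : ℕ) (hb : 2 ≤ b) (hn : 1 ≤ n)
    (j : ℕ) (hj1 : 1 ≤ j) (hjm : j ≤ m) :
    (∑ C : Fin m → Fin n → Fin b, (carry C j : ℝ)) / (b : ℝ) ^ (n * m) =
      ((n : ℝ) - 1) / 2 * (1 - 1 / (b : ℝ) ^ j) := by
  have : NeZero b := ⟨by omega⟩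
  have : NeZero n := ⟨by omega⟩
  have card_arrays : (Fintype.card (Fin m → Fin n → Fin b) : ℝ) = (b : ℝ) ^ (n * m) := by
    simp [pow_mul]
  rw [← card_arrays, ← Fintype.expect_eq_sum_div_card, expect_carry hjm]
end

section
/- Fix an integer base b ≥ 2 and a fixed column index j ≥ 1, and for each n ≥ 2 let κ_j^{(n)} denote the j-th carry when n numbers with i.i.d. uniform base-b digits are added, with mean μ_n = ((n−1)/2)(1 − b^{−j}) and standard deviation σ_n = √(((n+1)/12)(1 − b^{−2j})). Then for every real t, P( (κ_j^{(n)} − μ_n)/σ_n ≤ t ) → Φ(t) as n → ∞, where Φ is the standard normal cumulative distribution function Φ(t) = (1/√(2π)) ∫_{−∞}^t e^{−u²/2} du; i.e., the probability can be written as b^{−nj}·#{ C : {1,…,j}×{1,…,n} → {0,…,b−1} with κ_j(C) ≤ μ_n + t·σ_n }. -/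
/-!
The `j` digits `C · t` encode a uniform element of `{0, …, N - 1}` with `N = b ^ j`, these `n`
elements are independent, and the `j`-th carry is `⌊S / N⌋`, where `S` is their sum.
Dropping the rounding moves `⌊S / N⌋` by a bounded amount, which is negligible against a standard
deviation of order `√n`, so the central limit theorem for `S` passes to the carry by Slutsky's
theorem.
-/

open MeasureTheory ProbabilityTheory Filter Topology

section Carry

variable {b m n : ℕ}

theorem carry_eq_sum_div_pow (C : Fin m → Fin n → Fin b) {s : ℕ} (hs : s ≤ m) :
    carry C s = (∑ i : Fin s, (∑ t, (C (i.castLE hs) t : ℕ)) * b ^ (i : ℕ)) / b ^ s := by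
  induction s with
  | zero => simp [carry]
  | succ s ih =>
    rcases Nat.eq_zero_or_pos b with rfl | hb
    · simp [carry, Nat.lt_of_succ_le hs]
    · rw [carry, dif_pos (Nat.lt_of_succ_le hs), ih (Nat.le_of_succ_le hs),
        Fin.sum_univ_castSucc, pow_succ, ← Nat.div_div_eq_div_mul]
      exact congrArg (· / b) (Nat.add_mul_div_right _ _ (pow_pos hb s)).symm

theorem carry_eq_sum_finFunctionFinEquiv_div (C : Fin m → Fin n → Fin b) :
    carry C m = (∑ t, (finFunctionFinEquiv (fun s ↦ C s t) : ℕ)) / b ^ m := by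
  simp only [carry_eq_sum_div_pow C le_rfl, finFunctionFinEquiv_apply, Finset.sum_mul,
    Fin.castLE_rfl, id_eq]
  rw [Finset.sum_comm]

theorem card_carry_eq_card_sum_div (p : ℕ → Prop) :
    Nat.card {C : Fin m → Fin n → Fin b // p (carry C m)} =
      Nat.card {x : Fin n → Fin (b ^ m) // p ((∑ i, (x i : ℕ)) / b ^ m)} := by
  let digitsEquiv : (Fin m → Fin n → Fin b) ≃ (Fin n → Fin (b ^ m)) :=
    (Equiv.piComm _).trans (Equiv.piCongrRight fun _ ↦ finFunctionFinEquiv)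
  refine Nat.card_congr (digitsEquiv.subtypeEquiv fun C ↦ ?_)
  rw [carry_eq_sum_finFunctionFinEquiv_div]
  rfl

end Carry

section Convergence

variable {Ω Ω' : Type*} {mΩ : MeasurableSpace Ω} {mΩ' : MeasurableSpace Ω'}
  {P : Measure Ω} [IsProbabilityMeasure P] {P' : Measure Ω'} [IsProbabilityMeasure P']

theorem tendsto_measureReal_preimage_of_null_frontier {ι E : Type*} [TopologicalSpace E]
    [MeasurableSpace E] [OpensMeasurableSpace E] [HasOuterApproxClosed E] {l : Filter ι}
    {X : ι → Ω → E} {Z : Ω' → E} (h : TendstoInDistribution X l Z (fun _ ↦ P) P')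
    {s : Set E} (hs : MeasurableSet s) (hs_frontier : P' (Z ⁻¹' frontier s) = 0) :
    Tendsto (fun i ↦ P.real (X i ⁻¹' s)) l (𝓝 (P'.real (Z ⁻¹' s))) := by
  have map_frontier : P'.map Z (frontier s) = 0 := by
    rwa [Measure.map_apply_of_aemeasurable h.aemeasurable_limit isClosed_frontier.measurableSet]
  have tendsto_map :=
    ProbabilityMeasure.tendsto_measure_of_null_frontier_of_tendsto' h.tendsto map_frontier
  simp only [ProbabilityMeasure.coe_mk,
    Measure.map_apply_of_aemeasurable (h.forall_aemeasurable _) hs,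
    Measure.map_apply_of_aemeasurable h.aemeasurable_limit hs] at tendsto_map
  exact (ENNReal.tendsto_toReal (measure_ne_top _ _)).comp tendsto_map

theorem tendstoInDistribution_mul_add {X R : ℕ → Ω → ℝ} {Z : Ω' → ℝ} {a : ℕ → ℝ} {c : ℝ}
    (hX : TendstoInDistribution X atTop Z (fun _ ↦ P) P') (ha : Tendsto a atTop (𝓝 c))
    (hR_meas : ∀ n, AEMeasurable (R n) P) (hR : ∀ᵐ ω ∂P, Tendsto (R · ω) atTop (𝓝 0)) :
    TendstoInDistribution (fun n ω ↦ a n * X n ω + R n ω) atTop (fun ω ↦ c * Z ω)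
      (fun _ ↦ P) P' := by
  have pair_meas (n : ℕ) : AEMeasurable (fun ω ↦ (a n, R n ω)) P :=
    aemeasurable_const.prodMk (hR_meas n)
  have pair_tendsto : TendstoInMeasure P (fun n ω ↦ (a n, R n ω)) atTop (fun _ ↦ (c, 0)) :=
    tendstoInMeasure_of_tendsto_ae (fun n ↦ (pair_meas n).aestronglyMeasurable)
      (hR.mono fun ω hω ↦ ha.prodMk_nhds hω)
  simpa using hX.continuous_comp_prodMk_of_tendstoInMeasure_const
    (g := fun p : ℝ × (ℝ × ℝ) ↦ p.2.1 * p.1 + p.2.2) (by fun_prop) pair_tendsto pair_meas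

theorem tendstoInDistribution_standardized_sum {X : ℕ → Ω → ℝ} (hvar : Var[X 0; P] ≠ 0)
    (hindep : iIndepFun X P) (hident : ∀ i, IdentDistrib (X i) (X 0) P P) :
    TendstoInDistribution
      (fun (n : ℕ) ω ↦ (∑ k ∈ Finset.range n, X k ω - n * P[X 0]) / √(n * Var[X 0; P]))
      atTop id (fun _ ↦ P) (gaussianReal 0 1) := by
  have hσ : √Var[X 0; P] ≠ 0 := by
    rwa [Ne, Real.sqrt_eq_zero (variance_nonneg _ _)]
  have hlaw : HasLaw (fun z ↦ √Var[X 0; P] * z) (gaussianReal 0 Var[X 0; P].toNNReal)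
      (gaussianReal 0 1) := by
    refine ⟨by fun_prop, ?_⟩
    rw [gaussianReal_map_const_mul, mul_zero]
    congr 1
    exact NNReal.eq (by simp [Real.sq_sqrt (variance_nonneg _ _), variance_nonneg])
  have hX : MemLp (X 0) 2 P :=
    memLp_two_of_variance_ne_zero (hident 0).aemeasurable_fst.aestronglyMeasurable hvar
  convert (tendstoInDistribution_inv_sqrt_mul_sum_sub hlaw hX hindep hident).continuous_comp
    (continuous_id.div_const √Var[X 0; P]) using 1
  · ext n ω
    simp only [Function.comp_apply, id_eq, Real.sqrt_mul (Nat.cast_nonneg n)]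
    rw [div_mul_eq_div_div, div_eq_inv_mul (_ - _)]
  · ext z
    simp [hσ]

end Convergence

section Uniform

theorem measureReal_uniformOn_univ {α : Type*} [Finite α] [MeasurableSpace α]
    [MeasurableSingletonClass α] (s : Set α) :
    (uniformOn Set.univ : Measure α).real s = s.ncard / Nat.card α := by
  have := Fintype.ofFinite α
  have count_eq : Measure.count s = s.ncard := by
    rw [Measure.count_apply s.toFinite.measurableSet, ← s.toFinite.cast_ncard_eq,
      ENat.toENNReal_coe]
  rw [Measure.real, uniformOn_univ, count_eq]
  simp

theorem integral_uniformOn_univ {α E : Type*} [Fintype α] [MeasurableSpace α]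
    [MeasurableSingletonClass α] [NormedAddCommGroup E] [NormedSpace ℝ E] [CompleteSpace E]
    (f : α → E) :
    ∫ x, f x ∂(uniformOn Set.univ) = (Fintype.card α : ℝ)⁻¹ • ∑ x, f x := by
  rw [integral_fintype .of_finite, Finset.smul_sum]
  simp [measureReal_uniformOn_univ]

theorem measureReal_iid_uniform {α Ω : Type*} [Finite α] [MeasurableSpace α]
    [MeasurableSingletonClass α] {mΩ : MeasurableSpace Ω} {P : Measure Ω} {X : ℕ → Ω → α}
    (hlaw : ∀ k, HasLaw (X k) (uniformOn Set.univ) P) (hindep : iIndepFun X P) {n : ℕ}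
    (p : (Fin n → α) → Prop) :
    P.real {ω | p fun i ↦ X i ω} = Nat.card {x // p x} / (Nat.card α : ℝ) ^ n := by
  have hlaw_pi : HasLaw (fun ω (i : Fin n) ↦ X i ω) (uniformOn Set.univ) P := by
    have := (hindep.precomp Fin.val_injective).hasLaw_pi fun i : Fin n ↦ hlaw i
    rwa [← uniformOn_pi, Set.pi_univ] at this
  rw [hlaw_pi.measureReal_eq (Set.toFinite _).measurableSet, measureReal_uniformOn_univ]
  simp [← Nat.card_coe_set_eq, Nat.card_pi, Set.coe_ofPred]

theorem two_mul_sum_range_natCast {R : Type*} [CommRing R] (N : ℕ) :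
    2 * ∑ i ∈ Finset.range N, (i : R) = N * (N - 1) := by
  induction N with
  | zero => simp
  | succ n ih => rw [Finset.sum_range_succ, mul_add, ih]; push_cast; ring

theorem six_mul_sum_range_natCast_sq {R : Type*} [CommRing R] (N : ℕ) :
    6 * ∑ i ∈ Finset.range N, (i : R) ^ 2 = N * (N - 1) * (2 * N - 1) := by
  induction N with
  | zero => simp
  | succ n ih => rw [Finset.sum_range_succ, mul_add, ih]; push_cast; ring

variable {N : ℕ} [NeZero N]

theorem integral_val_uniformOn_fin :
    ∫ x : Fin N, (x : ℝ) ∂(uniformOn Set.univ) = ((N : ℝ) - 1) / 2 := by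
  have hN : (N : ℝ) ≠ 0 := NeZero.ne _
  have hsum := two_mul_sum_range_natCast (R := ℝ) N
  rw [integral_uniformOn_univ, Fintype.card_fin, smul_eq_mul,
    Fin.sum_univ_eq_sum_range (fun i ↦ (i : ℝ))]
  field_simp
  linarith

theorem integral_val_sq_uniformOn_fin :
    ∫ x : Fin N, (x : ℝ) ^ 2 ∂(uniformOn Set.univ) = ((N : ℝ) - 1) * (2 * N - 1) / 6 := by
  have hN : (N : ℝ) ≠ 0 := NeZero.ne _
  have hsum := six_mul_sum_range_natCast_sq (R := ℝ) N
  rw [integral_uniformOn_univ, Fintype.card_fin, smul_eq_mul,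
    Fin.sum_univ_eq_sum_range (fun i ↦ (i : ℝ) ^ 2)]
  field_simp
  linarith

theorem variance_val_uniformOn_fin :
    Var[fun x : Fin N ↦ (x : ℝ); uniformOn Set.univ] = ((N : ℝ) ^ 2 - 1) / 12 := by
  rw [variance_eq_sub .of_discrete]
  simp only [Pi.pow_apply, integral_val_uniformOn_fin, integral_val_sq_uniformOn_fin]
  ring

theorem tendstoInDistribution_standardized_sum_uniformOn_fin (hN : 2 ≤ N) {Ω : Type*}
    {mΩ : MeasurableSpace Ω} {P : Measure Ω} [IsProbabilityMeasure P] {X : ℕ → Ω → Fin N}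
    (hlaw : ∀ k, HasLaw (X k) (uniformOn Set.univ) P) (hindep : iIndepFun X P) :
    TendstoInDistribution
      (fun (n : ℕ) ω ↦ (∑ k ∈ Finset.range n, (X k ω : ℝ) - n * (((N : ℝ) - 1) / 2)) /
        √(n * (((N : ℝ) ^ 2 - 1) / 12)))
      atTop id (fun _ ↦ P) (gaussianReal 0 1) := by
  have hmeas : Measurable fun x : Fin N ↦ (x : ℝ) := .of_discrete
  have hident (k : ℕ) : IdentDistrib (fun ω ↦ (X k ω : ℝ)) (fun ω ↦ (X 0 ω : ℝ)) P P :=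
    ((hlaw k).identDistrib (hlaw 0)).comp hmeas
  have hmean : ∫ ω, (X 0 ω : ℝ) ∂P = ((N : ℝ) - 1) / 2 :=
    ((hlaw 0).integral_comp hmeas.aestronglyMeasurable).trans integral_val_uniformOn_fin
  have hvar : Var[fun ω ↦ (X 0 ω : ℝ); P] = ((N : ℝ) ^ 2 - 1) / 12 := by
    rw [← variance_val_uniformOn_fin, ← (hlaw 0).map_eq,
      variance_map hmeas.aemeasurable (hlaw 0).aemeasurable, Function.comp_def]
  have hvar_ne : Var[fun ω ↦ (X 0 ω : ℝ); P] ≠ 0 := by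
    have : (2 : ℝ) ≤ N := mod_cast hN
    rw [hvar]
    nlinarith
  have hindep_val : iIndepFun (fun k ω ↦ (X k ω : ℝ)) P :=
    hindep.comp (fun _ x ↦ (x : ℝ)) fun _ ↦ hmeas
  simpa only [hmean, hvar] using
    tendstoInDistribution_standardized_sum (X := fun k ω ↦ (X k ω : ℝ)) hvar_ne hindep_val hident

end Uniform

section Quotient

/-- The mean of `⌊S / N⌋`, where `S` is the sum of `n` independent uniform elements of
`{0, …, N - 1}` and `n ≥ 1`; it is used only as a centring constant. -/
noncomputable def quotientMean (N n : ℕ) : ℝ := ((n : ℝ) - 1) / 2 * (1 - 1 / N)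

/-- The standard deviation of `⌊S / N⌋`, where `S` is the sum of `n` independent uniform elements
of `{0, …, N - 1}` and `n ≥ 2`; it is used only as a scaling constant. -/
noncomputable def quotientStd (N n : ℕ) : ℝ := √(((n : ℝ) + 1) / 12 * (1 - 1 / (N : ℝ) ^ 2))

/-- Minus the fractional part of `S / N`, centred by `(1 - 1 / N) / 2`, the mean of the fractional
part for uniform residues: this is what rounding `S / N` down adds to the centred quotient. -/
noncomputable def roundingError (N S : ℕ) : ℝ := (1 - 1 / (N : ℝ)) / 2 - (S % N : ℕ) / N

variable {N : ℕ}

theorem quotientStd_eq_sqrt_div (hN : N ≠ 0) (n : ℕ) :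
    quotientStd N n = √(((n : ℝ) + 1) * (((N : ℝ) ^ 2 - 1) / 12)) / N := by
  have hN' : (N : ℝ) ≠ 0 := mod_cast hN
  rw [quotientStd, ← Real.sqrt_sq N.cast_nonneg, ← Real.sqrt_div' _ (sq_nonneg _),
    Real.sqrt_sq N.cast_nonneg]
  congr 1
  field_simp

theorem quotientStd_pos (hN : 2 ≤ N) (n : ℕ) : 0 < quotientStd N n := by
  have : (2 : ℝ) ≤ N := mod_cast hN
  rw [quotientStd_eq_sqrt_div (by lia)]
  have : 0 < (N : ℝ) ^ 2 - 1 := by nlinarith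
  positivity

theorem tendsto_quotientStd_atTop (hN : 2 ≤ N) : Tendsto (quotientStd N) atTop atTop := by
  have : (2 : ℝ) ≤ N := mod_cast hN
  have hvar : 0 < ((N : ℝ) ^ 2 - 1) / 12 := by nlinarith
  simp_rw [funext (quotientStd_eq_sqrt_div (N := N) (by lia))]
  exact (Real.tendsto_sqrt_atTop.comp <|
    (tendsto_atTop_add_const_right _ 1 tendsto_natCast_atTop_atTop).atTop_mul_const
      hvar).atTop_div_const (by positivity)

theorem natCast_div_sub_quotientMean (hN : N ≠ 0) (n S : ℕ) :
    ((S / N : ℕ) : ℝ) - quotientMean N n =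
      ((S : ℝ) - n * (((N : ℝ) - 1) / 2)) / N + roundingError N S := by
  have hN' : (N : ℝ) ≠ 0 := mod_cast hN
  have div_add_mod : (N : ℝ) * (S / N : ℕ) + (S % N : ℕ) = S := mod_cast Nat.div_add_mod S N
  rw [← div_add_mod, quotientMean, roundingError]
  field_simp
  ring

theorem abs_roundingError_le_one (N S : ℕ) : |roundingError N S| ≤ 1 := by
  rcases N.eq_zero_or_pos with rfl | hN
  · norm_num [roundingError]
  have mod_div_nonneg : 0 ≤ ((S % N : ℕ) : ℝ) / N := by positivity
  have mod_div_le : ((S % N : ℕ) : ℝ) / N ≤ 1 :=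
    div_le_one_of_le₀ (mod_cast (Nat.mod_lt S hN).le) N.cast_nonneg
  have inv_nonneg : 0 ≤ 1 / (N : ℝ) := by positivity
  have inv_le : 1 / (N : ℝ) ≤ 1 := by simpa using Nat.cast_inv_le_one N
  rw [roundingError, abs_le]
  constructor <;> linarith

theorem tendsto_roundingError_div_quotientStd (hN : 2 ≤ N) (S : ℕ → ℕ) :
    Tendsto (fun n ↦ roundingError N (S n) / quotientStd N n) atTop (𝓝 0) := by
  refine squeeze_zero_norm (fun n ↦ ?_) (tendsto_quotientStd_atTop hN).inv_tendsto_atTop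
  rw [norm_div, Real.norm_eq_abs, Real.norm_of_nonneg (quotientStd_pos hN n).le, Pi.inv_apply,
    inv_eq_one_div]
  gcongr
  · exact (quotientStd_pos hN n).le
  · exact abs_roundingError_le_one N (S n)

theorem standardized_sum_div_eq (hN : N ≠ 0) (x : ℕ → ℕ) (n : ℕ) :
    (((∑ k ∈ Finset.range n, x k) / N : ℕ) - quotientMean N n) / quotientStd N n =
      √((n : ℝ) / (n + 1)) *
          ((∑ k ∈ Finset.range n, (x k : ℝ) - n * (((N : ℝ) - 1) / 2)) /
            √(n * (((N : ℝ) ^ 2 - 1) / 12))) +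
        roundingError N (∑ k ∈ Finset.range n, x k) / quotientStd N n := by
  rw [natCast_div_sub_quotientMean hN, add_div, Nat.cast_sum]
  congr 1
  rcases n.eq_zero_or_pos with rfl | hn
  · simp
  · rw [quotientStd_eq_sqrt_div hN, Real.sqrt_mul n.cast_add_one_pos.le,
      Real.sqrt_mul n.cast_nonneg, Real.sqrt_div n.cast_nonneg]
    field_simp

theorem tendstoInDistribution_standardized_sum_div (hN : 2 ≤ N) {Ω : Type*}
    {mΩ : MeasurableSpace Ω} {P : Measure Ω} [IsProbabilityMeasure P] {X : ℕ → Ω → Fin N}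
    (hlaw : ∀ k, HasLaw (X k) (uniformOn Set.univ) P) (hindep : iIndepFun X P) :
    TendstoInDistribution
      (fun (n : ℕ) ω ↦ (((∑ k ∈ Finset.range n, (X k ω : ℕ)) / N : ℕ) - quotientMean N n) /
        quotientStd N n)
      atTop id (fun _ ↦ P) (gaussianReal 0 1) := by
  have : NeZero N := ⟨by lia⟩
  have tendsto_scale : Tendsto (fun n : ℕ ↦ √((n : ℝ) / (n + 1))) atTop (𝓝 1) := by
    simpa using (tendsto_natCast_div_add_atTop (1 : ℝ)).sqrt
  have sum_meas (n : ℕ) : AEMeasurable (fun ω ↦ ∑ k ∈ Finset.range n, (X k ω : ℕ)) P :=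
    Finset.aemeasurable_fun_sum _ fun k _ ↦
      Measurable.of_discrete.comp_aemeasurable (hlaw k).aemeasurable
  have error_meas (n : ℕ) : AEMeasurable
      (fun ω ↦ roundingError N (∑ k ∈ Finset.range n, (X k ω : ℕ)) / quotientStd N n) P :=
    (Measurable.of_discrete (f := roundingError N)).comp_aemeasurable (sum_meas n) |>.div_const _
  have slutsky := tendstoInDistribution_mul_add
    (tendstoInDistribution_standardized_sum_uniformOn_fin hN hlaw hindep) tendsto_scale error_meas
    (.of_forall fun ω ↦ tendsto_roundingError_div_quotientStd hN _)
  simp only [standardized_sum_div_eq (NeZero.ne N)]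
  simpa only [one_mul] using slutsky

theorem tendsto_card_sum_div_le (hN : 2 ≤ N) (t : ℝ) :
    Tendsto (fun n : ℕ ↦ (Nat.card {x : Fin n → Fin N //
        (((∑ i, (x i : ℕ)) / N : ℕ) : ℝ) ≤ quotientMean N n + t * quotientStd N n} : ℝ) /
          (N : ℝ) ^ n)
      atTop (𝓝 ((gaussianReal 0 1).real (Set.Iic t))) := by
  have : NeZero N := ⟨by lia⟩
  have := nullSingletonClass_gaussianReal (μ := 0) one_ne_zero
  obtain ⟨Ω, _, P, X, -, hlaw, hindep, _⟩ :=
    exists_iid ℕ (uniformOn Set.univ : Measure (Fin N))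
  convert tendsto_measureReal_preimage_of_null_frontier
    (tendstoInDistribution_standardized_sum_div hN hlaw hindep) measurableSet_Iic (s := Set.Iic t)
    (by simp) using 2 with n
  · have count := measureReal_iid_uniform hlaw hindep fun x : Fin n → Fin N ↦
      (((∑ i, (x i : ℕ)) / N : ℕ) : ℝ) ≤ quotientMean N n + t * quotientStd N n
    rw [Nat.card_fin] at count
    rw [← count]
    congr 1 with ω
    rw [Set.mem_preimage, Set.mem_Iic, div_le_iff₀ (quotientStd_pos hN n), sub_le_iff_le_add',
      Set.mem_ofPred_eq, Fin.sum_univ_eq_sum_range (fun k ↦ (X k ω : ℕ))]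
  · rfl

end Quotient

theorem measureReal_gaussianReal_zero_one (s : Set ℝ) :
    (gaussianReal 0 1).real s = (1 / √(2 * Real.pi)) * ∫ u in s, Real.exp (-u ^ 2 / 2) := by
  rw [Measure.real, gaussianReal_apply_eq_integral _ one_ne_zero, ENNReal.toReal_ofReal
    (integral_nonneg fun x ↦ gaussianPDFReal_nonneg _ _ _), ← integral_const_mul]
  simp [gaussianPDFReal]

open Filter in
/-- **Central limit theorem for carries** (Theorem 4 of Diaconis–Fulman): fix a base
`b ≥ 2` and a column `j ≥ 1`.  Normalized by its mean
`μ_n = ((n−1)/2)(1 − b^{−j})` and standard deviation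
`σ_n = √(((n+1)/12)(1 − b^{−2j}))`, the `j`-th carry `κ_j` when `n` numbers with i.i.d.
uniform base-`b` digits are added has a limiting standard normal distribution as
`n → ∞`. -/
theorem carries_central_limit (b j : ℕ) (hb : 2 ≤ b) (hj : 1 ≤ j) (t : ℝ) :
    Tendsto (fun n : ℕ =>
        (Nat.card {C : Fin j → Fin n → Fin b //
            (carry C j : ℝ) ≤
              ((n : ℝ) - 1) / 2 * (1 - 1 / (b : ℝ) ^ j) +
                t * Real.sqrt (((n : ℝ) + 1) / 12 * (1 - 1 / (b : ℝ) ^ (2 * j)))} : ℝ) /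
          (b : ℝ) ^ (n * j))
      atTop
      (nhds ((1 / Real.sqrt (2 * Real.pi)) * ∫ u in Set.Iic t, Real.exp (-u ^ 2 / 2))) := by
  have hN : 2 ≤ b ^ j := hb.trans (Nat.le_self_pow (by lia) b)
  convert tendsto_card_sum_div_le hN t using 2 with n
  · rw [card_carry_eq_card_sum_div fun κ ↦ (κ : ℝ) ≤ _]
    simp only [quotientMean, quotientStd, Nat.cast_pow, ← pow_mul, mul_comm]
  · rw [measureReal_gaussianReal_zero_one]
end

section
/- Fix integers b ≥ 2 and n ≥ 1. The Holte carries matrix P_b is totally positive of order two: for all 0 ≤ i ≤ i' ≤ n−1 and 0 ≤ j ≤ j' ≤ n−1, P_b(i,j)·P_b(i',j') ≥ P_b(i,j')·P_b(i',j). -/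
/-- Holte's "amazing matrix": the carries Markov chain transition probability
`P_b(i,j) = b^{-n} · #{(x_1,…,x_n) ∈ {0,…,b−1}^n : jb ≤ i + x_1 + ⋯ + x_n ≤ (j+1)b − 1}`. -/
noncomputable def Pmat (b n : ℕ) (i j : ℕ) : ℝ :=
  (Nat.card {x : Fin n → Fin b //
      j * b ≤ i + ∑ t, (x t : ℕ) ∧ i + ∑ t, (x t : ℕ) ≤ (j + 1) * b - 1} : ℝ) / b ^ n

/-!
Adding `n` digits to an incoming carry `i` and recording the outgoing carry `⌊· / b⌋` is a
composition of elementary kernels: each digit moves the running total `z` uniformly within the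
window `[z, z + b)`, and the last step is the monotone map `z ↦ ⌊z / b⌋`. The indicator kernels of
both are totally positive of order two, and by the Cauchy–Binet formula so is their composition.
-/

open Finset

/-- Total positivity of order two of a kernel `K` indexed by two ordered types: all its `2 × 2`
minors are nonnegative. The entries themselves are not required to be nonnegative. -/
def IsTP2 {α β R : Type*} [Preorder α] [Preorder β] [Mul R] [LE R] (K : α → β → R) : Prop :=
  ∀ ⦃x x' : α⦄, x ≤ x' → ∀ ⦃y y' : β⦄, y ≤ y' → K x y' * K x' y ≤ K x y * K x' y'

section IsTP2

variable {α β γ R : Type*} [Preorder α]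

theorem isTP2_indicator [Preorder β] [MulZeroOneClass R] [Preorder R] [ZeroLEOneClass R]
    (r : α → β → Prop) [∀ x y, Decidable (r x y)]
    (hr : ∀ ⦃x x'⦄, x ≤ x' → ∀ ⦃y y'⦄, y ≤ y' → r x y' → r x' y → r x y ∧ r x' y') :
    IsTP2 fun x y => if r x y then (1 : R) else 0 := by
  intro x x' hx y y' hy
  simp only [ite_zero_mul_ite_zero, mul_one]
  split_ifs with hanti hdiag
  · exact le_rfl
  · exact absurd (hr hx hy hanti.1 hanti.2) hdiag
  · exact zero_le_one
  · exact le_rfl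

theorem isTP2_indicator_graph [PartialOrder β] [DecidableEq β] [MulZeroOneClass R] [Preorder R]
    [ZeroLEOneClass R] {f : α → β} (hf : Monotone f) :
    IsTP2 fun x y => if f x = y then (1 : R) else 0 := by
  refine isTP2_indicator _ fun x x' hx y y' hy hxy' hx'y => ?_
  have hyy' : y = y' := hy.antisymm (hxy' ▸ hx'y ▸ hf hx)
  exact ⟨hxy'.trans hyy'.symm, hx'y.trans hyy'⟩

theorem isTP2_indicator_Ico [Preorder γ] [LocallyFiniteOrder γ] [DecidableEq γ]
    [MulZeroOneClass R] [Preorder R] [ZeroLEOneClass R] {l u : α → γ}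
    (hl : Monotone l) (hu : Monotone u) :
    IsTP2 fun x z => if z ∈ Ico (l x) (u x) then (1 : R) else 0 := by
  refine isTP2_indicator _ fun x x' hx z z' hz hxz' hx'z => ?_
  rw [mem_Ico] at hxz' hx'z
  rw [mem_Ico, mem_Ico]
  exact ⟨⟨(hl hx).trans hx'z.1, hz.trans_lt hxz'.2⟩, hx'z.1.trans hz, hxz'.2.trans_le (hu hx)⟩

theorem two_nsmul_sum_mul_sum_sub_sum_mul_sum [CommRing R] (s : Finset γ) (p q r t : γ → R) :
    2 • ((∑ z ∈ s, p z * r z) * (∑ z ∈ s, q z * t z) -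
        (∑ z ∈ s, p z * t z) * ∑ z ∈ s, q z * r z) =
      ∑ z ∈ s, ∑ w ∈ s, (p z * q w - p w * q z) * (r z * t w - t z * r w) := by
  have expand (z w : γ) : (p z * q w - p w * q z) * (r z * t w - t z * r w) =
      p z * r z * (q w * t w) - p z * t z * (q w * r w)
        + (q z * t z * (p w * r w) - q z * r z * (p w * t w)) := by ring
  simp only [expand, sum_add_distrib, sum_sub_distrib, ← sum_mul_sum]
  ring

variable [Preorder β] [CommRing R] [LinearOrder R]

theorem IsTP2.comp [IsOrderedRing R] [LinearOrder γ] {K : α → γ → R} {L : γ → β → R}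
    (hK : IsTP2 K) (hL : IsTP2 L) (s : Finset γ) :
    IsTP2 fun x y => ∑ z ∈ s, K x z * L z y := by
  intro x x' hx y y' hy
  rw [← sub_nonneg, ← nsmul_nonneg_iff two_ne_zero, two_nsmul_sum_mul_sum_sub_sum_mul_sum]
  refine sum_nonneg fun z _ => sum_nonneg fun w _ => ?_
  rcases le_total z w with hzw | hwz
  · exact mul_nonneg (sub_nonneg.2 (hK hx hzw)) (sub_nonneg.2 (hL hzw hy))
  · have hminorL : L z y * L w y' - L z y' * L w y ≤ 0 :=
      sub_nonpos.2 (by simpa only [mul_comm] using hL hwz hy)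
    exact mul_nonneg_of_nonpos_of_nonpos (sub_nonpos.2 (hK hx hwz)) hminorL

theorem IsTP2.sum_Ico [IsOrderedRing R] [LinearOrder γ] [LocallyFiniteOrder γ] {L : γ → β → R}
    (hL : IsTP2 L) {l u : α → γ} (hl : Monotone l) (hu : Monotone u) :
    IsTP2 fun x y => ∑ z ∈ Ico (l x) (u x), L z y := by
  intro x x' hx y y' hy
  have sum_window {a : α} (hxa : x ≤ a) (hax' : a ≤ x') (v : β) :
      ∑ z ∈ Ico (l x) (u x'), (if z ∈ Ico (l a) (u a) then 1 else 0) * L z v =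
        ∑ z ∈ Ico (l a) (u a), L z v := by
    simp only [ite_mul, one_mul, zero_mul]
    rw [sum_ite_mem, inter_eq_right.2 (Ico_subset_Ico (hl hxa) (hu hax'))]
  have hcomp := (isTP2_indicator_Ico (R := R) hl hu).comp hL (Ico (l x) (u x')) hx hy
  simpa only [sum_window le_rfl hx, sum_window hx le_rfl] using hcomp

theorem IsTP2.div_const {F : Type*} [Field F] [LinearOrder F] [IsStrictOrderedRing F]
    {K : α → β → F} (hK : IsTP2 K) (c : F) : IsTP2 fun x y => K x y / c := by
  intro x x' hx y y' hy
  simp only [div_mul_div_comm]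
  exact div_le_div_of_nonneg_right (hK hx hy) (mul_self_nonneg c)

end IsTP2

theorem sum_digits_succ {M : Type*} [AddCommMonoid M] (b n i : ℕ) (f : ℕ → M) :
    ∑ x : Fin (n + 1) → Fin b, f (i + ∑ t, (x t : ℕ)) =
      ∑ z ∈ Ico i (i + b), ∑ x : Fin n → Fin b, f (z + ∑ t, (x t : ℕ)) := by
  rw [← (Fin.consEquiv fun _ => Fin b).sum_comp, Fintype.sum_prod_type, sum_Ico_eq_sum_range,
    Nat.add_sub_cancel_left, sum_range]
  simp [Fin.consEquiv, Fin.sum_univ_succ, add_assoc]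

theorem IsTP2.sum_digits {β R : Type*} [Preorder β] [CommRing R] [LinearOrder R] [IsOrderedRing R]
    {L : ℕ → β → R} (hL : IsTP2 L) (b n : ℕ) :
    IsTP2 fun i j => ∑ x : Fin n → Fin b, L (i + ∑ t, (x t : ℕ)) j := by
  induction n with
  | zero => simpa using hL
  | succ n ih =>
    simp only [fun i j => sum_digits_succ b n i (L · j)]
    exact ih.sum_Ico monotone_id (monotone_id.add_const b)

theorem Pmat_eq_sum_digits (b n i j : ℕ) (hb : 0 < b) :
    Pmat b n i j =
      (∑ x : Fin n → Fin b, if (i + ∑ t, (x t : ℕ)) / b = j then 1 else 0) / (b : ℝ) ^ n := by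
  have carry_eq_iff (m : ℕ) : j * b ≤ m ∧ m ≤ (j + 1) * b - 1 ↔ m / b = j := by
    rw [Nat.div_eq_iff hb, add_one_mul]
  simp only [Pmat, carry_eq_iff, Nat.card_eq_fintype_card, Fintype.card_subtype, sum_boole]

theorem holte_matrix_TP2_general (b n : ℕ) (hb : 0 < b) : IsTP2 (Pmat b n) := by
  have hcarry : IsTP2 fun m j : ℕ => if m / b = j then (1 : ℝ) else 0 :=
    isTP2_indicator_graph fun _ _ h => Nat.div_le_div_right h
  simpa only [IsTP2, Pmat_eq_sum_digits b n _ _ hb] using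
    (hcarry.sum_digits b n).div_const ((b : ℝ) ^ n)

/-- **Lemma 5 of Diaconis–Fulman**: Holte's carries matrix is totally positive of order
two: every `2×2` minor is non-negative. -/
theorem holte_matrix_TP2 (b n : ℕ) (hb : 2 ≤ b) (hn : 1 ≤ n)
    (i i' j j' : ℕ) (hii' : i ≤ i') (hi' : i' ≤ n - 1) (hjj' : j ≤ j') (hj' : j' ≤ n - 1) :
    Pmat b n i j' * Pmat b n i' j ≤ Pmat b n i j * Pmat b n i' j' :=
  holte_matrix_TP2_general b n (zero_lt_two.trans_le hb) hii' hjj'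
end

section
/- Fix integers b ≥ 2 and N ≥ 1, and let M be the N×N matrix with M(i,j) = 1 if 0 ≤ i − j ≤ b−1 and M(i,j) = 0 otherwise (a lower triangular banded 0/1 matrix with ones on the main diagonal and the next b−1 subdiagonals). Then M is totally positive of order two: for all i ≤ i' and j ≤ j', M(i,j)·M(i',j') ≥ M(i,j')·M(i',j). -/
/-- The banded 0/1 matrix with ones on the main diagonal and on the next `b−1`
subdiagonals: `M(i,j) = 1` if `0 ≤ i − j ≤ b − 1` and `M(i,j) = 0` otherwise. -/
def bandMat (b : ℕ) (i j : ℕ) : ℝ :=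
  if j ≤ i ∧ i ≤ j + (b - 1) then 1 else 0

section TotalPositivity

variable {α β R : Type*} [Preorder α] [Preorder β]

/-- Total positivity of order two of a kernel `K`, i.e. of a matrix with rows indexed by `α` and
columns by `β`. The non-negativity of its `2 × 2` minors is written without subtraction, so that it
makes sense for entries in an ordered semiring. -/
def IsTP₂ [Mul R] [LE R] (K : α → β → R) : Prop :=
  ∀ ⦃i i' : α⦄, i ≤ i' → ∀ ⦃j j' : β⦄, j ≤ j' → K i j' * K i' j ≤ K i j * K i' j'

variable [MulZeroOneClass R] [Preorder R] [ZeroLEOneClass R]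

theorem isTP₂_ite_of_exchange {P : α → β → Prop} [∀ i j, Decidable (P i j)]
    (exchange : ∀ ⦃i i' : α⦄, i ≤ i' → ∀ ⦃j j' : β⦄, j ≤ j' →
      P i j' → P i' j → P i j ∧ P i' j') :
    IsTP₂ fun i j ↦ if P i j then (1 : R) else 0 := by
  intro i i' hi j j' hj
  simp only [ite_zero_mul_ite_zero, mul_one]
  by_cases antidiagonal : P i j' ∧ P i' j
  · have diagonal : P i j ∧ P i' j' := exchange hi hj antidiagonal.1 antidiagonal.2
    rw [if_pos antidiagonal, if_pos diagonal]
  · rw [if_neg antidiagonal]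
    exact ite_nonneg zero_le_one le_rfl

theorem isTP₂_ite_between_monotone [DecidableLE α] {l u : β → α}
    (hl : Monotone l) (hu : Monotone u) :
    IsTP₂ fun i j ↦ if l j ≤ i ∧ i ≤ u j then (1 : R) else 0 := by
  refine isTP₂_ite_of_exchange ?_
  rintro i i' hi j j' hj ⟨lower, -⟩ ⟨-, upper⟩
  exact ⟨⟨(hl hj).trans lower, hi.trans upper⟩, ⟨lower.trans hi, upper.trans (hu hj)⟩⟩

end TotalPositivity

/-- The banded lower-triangular 0/1 matrix appearing in the proof that Holte's carries
matrix is TP₂ is itself totally positive of order two: every `2×2` minor is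
non-negative. -/
theorem band_matrix_TP2 (b N : ℕ) (hb : 2 ≤ b) (hN : 1 ≤ N)
    (i i' j j' : ℕ) (hii' : i ≤ i') (hjj' : j ≤ j') (hi' : i' < N) (hj' : j' < N) :
    bandMat b i j' * bandMat b i' j ≤ bandMat b i j * bandMat b i' j' := by
  have isTP₂_bandMat : IsTP₂ (bandMat b) :=
    isTP₂_ite_between_monotone monotone_id (monotone_id.add_const (b - 1))
  exact isTP₂_bandMat hii' hjj'
end

section
/- Fix integers k ≥ 1 and b ≥ 2, and let K_b be the k×k multiplication-carries matrix. Then K_b is doubly stochastic: for every 0 ≤ i ≤ k−1, Σ_{j=0}^{k−1} K_b(i,j) = 1, and for every 0 ≤ j ≤ k−1, Σ_{i=0}^{k−1} K_b(i,j) = 1. In particular the uniform distribution on {0,…,k−1} is stationary for the carries chain of base-b multiplication by k. -/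
/-- The multiplication-carries matrix: `K_b(i,j)` is the transition probability from
carry `i` to carry `j` when multiplying a number with uniform random base-`b` digits by
`k`, i.e. `K_b(i,j) = (1/b)·#{d ∈ {0,…,b−1} : ⌊(i + k·d)/b⌋ = j}`. -/
noncomputable def Kmat (k b : ℕ) (i j : ℕ) : ℝ :=
  (Nat.card {d : Fin b // (i + k * (d : ℕ)) / b = j} : ℝ) / b

/-!
A row sum counts each digit `d` once, under the carry it produces. For a column sum, Euclidean
division by `k` makes `(i, d) ↦ i + k * d` a bijection from `{0, …, k - 1} × {0, …, b - 1}` onto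
`{0, …, k * b - 1}`, so summing over `i` counts the `n < k * b` with `⌊n / b⌋ = j`, which form a
block of `b` consecutive integers.
-/

open Finset

theorem sum_range_sum_range_add_mul {M : Type*} [AddCommMonoid M] (f : ℕ → M) (m n : ℕ) :
    ∑ i ∈ range m, ∑ d ∈ range n, f (i + m * d) = ∑ x ∈ range (m * n), f x := by
  rw [sum_comm, mul_comm m n]
  simp only [sum_range]
  rw [← Fintype.sum_prod_type']
  exact finProdFinEquiv.sum_comp fun x : Fin (n * m) ↦ f x

theorem sum_card_filter_range_add_mul (p : ℕ → Prop) [DecidablePred p] (m n : ℕ) :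
    ∑ i ∈ range m, #{d ∈ range n | p (i + m * d)} = #{x ∈ range (m * n) | p x} := by
  simp only [card_filter]
  exact sum_range_sum_range_add_mul (fun x ↦ if p x then 1 else 0) m n

theorem filter_range_mul_div_eq {m j : ℕ} (hj : j < m) (n : ℕ) :
    {x ∈ range (m * n) | x / n = j} = Ico (j * n) (j * n + n) := by
  obtain rfl | hn := n.eq_zero_or_pos
  · simp
  have block_le : j * n + n ≤ m * n := by
    simpa only [Nat.succ_mul] using Nat.mul_le_mul_right n hj
  ext x
  simp only [mem_filter, mem_range, mem_Ico, Nat.div_eq_iff hn]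
  omega

theorem add_mul_div_lt {k b i d : ℕ} (hi : i < k) (hd : d < b) : (i + k * d) / b < k := by
  refine Nat.div_lt_of_lt_mul ?_
  calc
    i + k * d < k + k * d := Nat.add_lt_add_right hi _
    _ = (d + 1) * k := by ring
    _ ≤ b * k := Nat.mul_le_mul_right k hd

theorem Kmat_eq_card_filter_range_div (k b i j : ℕ) :
    Kmat k b i j = (#{d ∈ range b | (i + k * d) / b = j} : ℝ) / b := by
  rw [Kmat, Nat.card_eq_fintype_card, Fintype.card_subtype, card_filter, card_filter, sum_range]

theorem sum_Kmat_row {k b i : ℕ} (hb : b ≠ 0) (hi : i < k) :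
    ∑ j ∈ range k, Kmat k b i j = 1 := by
  have carry_mapsTo : Set.MapsTo (fun d ↦ (i + k * d) / b) (range b) (range k) := fun d hd ↦
    mem_coe.2 <| mem_range.2 <| add_mul_div_lt hi <| mem_range.1 <| mem_coe.1 hd
  simp only [Kmat_eq_card_filter_range_div]
  rw [← sum_div, ← Nat.cast_sum, ← card_eq_sum_card_fiberwise carry_mapsTo, card_range,
    div_self (Nat.cast_ne_zero.2 hb)]

theorem sum_Kmat_column {k b j : ℕ} (hb : b ≠ 0) (hj : j < k) :
    ∑ i ∈ range k, Kmat k b i j = 1 := by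
  simp only [Kmat_eq_card_filter_range_div]
  rw [← sum_div, ← Nat.cast_sum, sum_card_filter_range_add_mul (fun x ↦ x / b = j),
    filter_range_mul_div_eq hj, Nat.card_Ico, Nat.add_sub_cancel_left,
    div_self (Nat.cast_ne_zero.2 hb)]

/-- The multiplication-carries matrix is **doubly stochastic**: all row sums and all
column sums equal `1`.  In particular the uniform distribution on `{0,…,k−1}` is
stationary for the carries chain of base-`b` multiplication by `k`. -/
theorem Kmat_doubly_stochastic (k b : ℕ) (hk : 1 ≤ k) (hb : 2 ≤ b) :
    (∀ i, i < k → ∑ j ∈ Finset.range k, Kmat k b i j = 1) ∧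
      (∀ j, j < k → ∑ i ∈ Finset.range k, Kmat k b i j = 1) := by
  have hb_ne_zero : b ≠ 0 := by omega
  exact ⟨fun _ hi ↦ sum_Kmat_row hb_ne_zero hi, fun _ hj ↦ sum_Kmat_column hb_ne_zero hj⟩
end

section
/- Fix integers k ≥ 1 and b ≥ 2, and let K_b be the k×k multiplication-carries matrix. Then K_b is a generalized circulant: each column is obtained from the previous column by shifting it downward by b mod k. Precisely, for all 0 ≤ i,j ≤ k−1, K_b((i + b) mod k, (j + 1) mod k) = K_b(i, j). -/
/-!
Dividing `i + k * d` by `b` gives `i + k * d = r + b * j` with `j` the outgoing carry and `r < b`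
the output digit. Since `i < k`, this equation is also the division of `r + b * j` by `k`, so it
determines `d` from `r`. Counting output digits instead of input digits gives
`b * K_b(i, j) = #{r < b : r + b * j ≡ i [MOD k]}`, and this congruence depends only on the residues
of `i` and `j` modulo `k` and is invariant under `(i, j) ↦ (i + b, j + 1)`.
-/

open Finset

lemma card_subtype_fin_eq_card_filter_range (n : ℕ) (p : ℕ → Prop) [DecidablePred p] :
    Nat.card {d : Fin n // p d} = #{d ∈ range n | p d} := by
  rw [Nat.card_eq_fintype_card, Fintype.card_subtype, card_filter, card_filter, sum_range]

lemma mod_add_mul_of_div_eq {n m q : ℕ} (h : n / m = q) : n % m + m * q = n := by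
  rw [← h, Nat.mod_add_div]

lemma add_mul_div_of_modEq {n m a : ℕ} (ha : a < m) (h : n ≡ a [MOD m]) : a + m * (n / m) = n := by
  rw [← Nat.mod_eq_of_modEq h ha, Nat.mod_add_div]

section Carries

variable {k b i j r : ℕ}

lemma add_mul_div_lt_s15 (hj : j < k) (hr : r < b) : (r + b * j) / k < b := by
  apply Nat.div_lt_of_lt_mul
  calc r + b * j < b + b * j := by gcongr
    _ = (j + 1) * b := by ring
    _ ≤ k * b := by gcongr; exact hj

theorem card_filter_carry_eq_card_filter_modEq (hi : i < k) (hj : j < k) :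
    #{d ∈ range b | (i + k * d) / b = j} = #{r ∈ range b | r + b * j ≡ i [MOD k]} := by
  refine card_bij' (fun d _ ↦ (i + k * d) % b) (fun r _ ↦ (r + b * j) / k) ?_ ?_ ?_ ?_ <;>
    simp only [mem_filter, mem_range, and_imp]
  · intro d hd hcarry
    refine ⟨Nat.mod_lt _ (Nat.zero_lt_of_lt hd), ?_⟩
    rw [mod_add_mul_of_div_eq hcarry]
    exact Nat.add_mul_mod_self_left i k d
  · intro r hr hmod
    refine ⟨add_mul_div_lt_s15 hj hr, ?_⟩
    rw [add_mul_div_of_modEq hi hmod, Nat.add_mul_div_left _ _ (Nat.zero_lt_of_lt hr),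
      Nat.div_eq_of_lt hr, zero_add]
  · intro d _ hcarry
    rw [mod_add_mul_of_div_eq hcarry, Nat.add_mul_div_left _ _ (Nat.zero_lt_of_lt hi),
      Nat.div_eq_of_lt hi, zero_add]
  · intro r hr hmod
    rw [add_mul_div_of_modEq hi hmod, Nat.add_mul_mod_self_left, Nat.mod_eq_of_lt hr]

theorem Kmat_eq_card_filter_modEq_div (hi : i < k) (hj : j < k) :
    Kmat k b i j = #{r ∈ range b | r + b * j ≡ i [MOD k]} / b := by
  rw [Kmat, card_subtype_fin_eq_card_filter_range b fun d ↦ (i + k * d) / b = j,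
    card_filter_carry_eq_card_filter_modEq hi hj]

lemma add_mul_succ_mod_modEq_iff :
    r + b * ((j + 1) % k) ≡ (i + b) % k [MOD k] ↔ r + b * j ≡ i [MOD k] := by
  have shift_left : r + b * ((j + 1) % k) ≡ r + b * j + b [MOD k] :=
    (((Nat.mod_modEq (j + 1) k).mul_left b).add_left r).trans (by rw [mul_add_one, add_assoc])
  have shift_right : (i + b) % k ≡ i + b [MOD k] := Nat.mod_modEq _ _
  calc r + b * ((j + 1) % k) ≡ (i + b) % k [MOD k]
      ↔ r + b * j + b ≡ i + b [MOD k] :=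
        ⟨fun h ↦ shift_left.symm.trans (h.trans shift_right),
          fun h ↦ shift_left.trans (h.trans shift_right.symm)⟩
    _ ↔ r + b * j ≡ i [MOD k] := (Nat.ModEq.refl b).add_iff_right

end Carries

/-- The multiplication-carries matrix is a **generalized circulant**: each column is
obtained from the previous column by shifting it downward by `b mod k`; precisely,
`K_b((i + b) mod k, (j + 1) mod k) = K_b(i, j)`. -/
theorem Kmat_generalized_circulant (k b : ℕ) (hk : 1 ≤ k) (hb : 2 ≤ b)
    (i j : ℕ) (hi : i < k) (hj : j < k) :
    Kmat k b ((i + b) % k) ((j + 1) % k) = Kmat k b i j := by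
  rw [Kmat_eq_card_filter_modEq_div (Nat.mod_lt _ hk) (Nat.mod_lt _ hk),
    Kmat_eq_card_filter_modEq_div hi hj]
  simp only [add_mul_succ_mod_modEq_iff]
end

section
/- Fix integers k ≥ 1, b ≥ 2 and r ≥ 0, and let K_b be the k×k multiplication-carries matrix. Then for every 0 ≤ j ≤ k−1, the r-step transition probability from carry 0 satisfies (K_b)^r(0,j) = (1/b^r)·#{x ∈ ℤ : 0 ≤ x < b^r and j·b^r ≤ k·x < (j+1)·b^r}; equivalently, the carry after processing r uniform digits (least significant first) of a number x starting from carry 0 is ⌊k·x/b^r⌋. -/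
/-- The multiplication-carries matrix as a `k × k` real matrix: `K_b(i,j)` is the
transition probability from carry `i` to carry `j` when multiplying a number with
uniform random base-`b` digits by `k`, i.e.
`K_b(i,j) = (1/b)·#{d ∈ {0,…,b−1} : ⌊(i + k·d)/b⌋ = j}`. -/
noncomputable def KM (k b : ℕ) : Matrix (Fin k) (Fin k) ℝ :=
  Matrix.of fun i j =>
    (Nat.card {d : Fin b // ((i : ℕ) + k * (d : ℕ)) / b = (j : ℕ)} : ℝ) / b

/-!
Reading a base-`a * b` digit `x + a * d` as a base-`a` digit `x` followed by a base-`b` digit `d`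
does not change the outgoing carry, and `(x, d) ↦ x + a * d` is a bijection, so the carries matrices
are multiplicative in the base: `K_a * K_b = K_{ab}`. Hence `K_b ^ r = K_{b ^ r}`: processing `r`
digits in base `b` is processing a single digit in base `b ^ r`.
-/

theorem sum_card_fiber_mul_card_fiber {α β ι κ : Type*} [Finite α] [Finite β] [Fintype ι]
    (f : α → ι) (g : ι → β → κ) (c : κ) :
    ∑ i, Nat.card {x // f x = i} * Nat.card {y // g i y = c} =
      Nat.card {p : α × β // g (f p.1) p.2 = c} := by
  let e : {p : α × β // g (f p.1) p.2 = c} ≃ Σ i, {x // f x = i} × {y // g i y = c} :=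
    { toFun p := ⟨f p.1.1, ⟨p.1.1, rfl⟩, ⟨p.1.2, p.2⟩⟩
      invFun s := ⟨(s.2.1.1, s.2.2.1), by rw [s.2.1.2]; exact s.2.2.2⟩
      left_inv _ := rfl
      right_inv := by rintro ⟨_, ⟨x, rfl⟩, y⟩; rfl }
  simp only [Nat.card_congr e, Nat.card_sigma, Nat.card_prod]

theorem nat_div_eq_iff_mul_le_and_lt_mul {m n q : ℕ} (hm : 0 < m) :
    n / m = q ↔ q * m ≤ n ∧ n < (q + 1) * m := by
  rw [← Nat.le_div_iff_mul_le hm, ← Nat.div_lt_iff_lt_mul hm]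
  omega

section Carry

variable {k a b : ℕ}

theorem add_mul_div_lt_of_lt {i d : ℕ} (hi : i < k) (hd : d < b) : (i + k * d) / b < k := by
  refine Nat.div_lt_of_lt_mul ?_
  calc i + k * d < k + k * d := by gcongr
    _ = (d + 1) * k := by ring
    _ ≤ b * k := by gcongr; exact hd

/-- The carry out of a base-`b` position when a number is multiplied by `k`, where `d` is the digit
of that number in this position and `i` is the incoming carry. Bundling it as an element of `Fin k`
makes it the update map of the chain with transition matrix `KM k b`. -/
def mulCarry (i : Fin k) (d : Fin b) : Fin k :=
  ⟨(i + k * d) / b, add_mul_div_lt_of_lt i.isLt d.isLt⟩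

theorem mulCarry_finProdFinEquiv (i : Fin k) (x : Fin a) (d : Fin b) :
    mulCarry i (finProdFinEquiv (d, x)) = mulCarry (mulCarry i x) d := by
  have ha : 0 < a := x.pos
  ext
  calc (i + k * (x + a * d)) / (b * a) = (i + k * x + a * (k * d)) / a / b := by
        rw [Nat.div_div_eq_div_mul, mul_comm b a]; ring_nf
    _ = ((i + k * x) / a + k * d) / b := by rw [Nat.add_mul_div_left _ _ ha]

theorem KM_apply (i j : Fin k) :
    KM k b i j = (Nat.card {d : Fin b // mulCarry i d = j} : ℝ) / b := by
  simp only [KM, Matrix.of_apply, mulCarry, Fin.ext_iff]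

theorem card_mulCarry_fiber_mul (i j : Fin k) :
    Nat.card {y : Fin (b * a) // mulCarry i y = j} =
      ∑ l, Nat.card {x : Fin a // mulCarry i x = l} * Nat.card {d : Fin b // mulCarry l d = j} := by
  rw [sum_card_fiber_mul_card_fiber]
  refine (Nat.card_congr (((Equiv.prodComm _ _).trans finProdFinEquiv).subtypeEquiv ?_)).symm
  rintro ⟨x, d⟩
  rw [Equiv.trans_apply, Equiv.prodComm_apply, Prod.swap_prod_mk, mulCarry_finProdFinEquiv]

end Carry

theorem KM_base_one (k : ℕ) : KM k 1 = 1 := by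
  ext i j
  by_cases hij : (i : ℕ) = j <;> simp [KM, Matrix.one_apply, Fin.ext_iff, hij]

theorem KM_mul_KM (k a b : ℕ) : KM k a * KM k b = KM k (a * b) := by
  ext i j
  rw [mul_comm a b]
  simp only [Matrix.mul_apply, KM_apply, card_mulCarry_fiber_mul, div_mul_div_comm,
    ← Finset.sum_div]
  push_cast
  rw [mul_comm (a : ℝ)]

theorem KM_pow (k b r : ℕ) : KM k b ^ r = KM k (b ^ r) := by
  induction r with
  | zero => rw [pow_zero, pow_zero, KM_base_one]
  | succ r ih => rw [pow_succ, pow_succ, ih, KM_mul_KM]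

theorem Kmat_power_entry_general (k b : ℕ) (hb : 0 < b) (r : ℕ) (i j : Fin k) :
    (KM k b ^ r) i j =
      (Nat.card {x : Fin (b ^ r) //
          (j : ℕ) * b ^ r ≤ i + k * (x : ℕ) ∧ i + k * (x : ℕ) < ((j : ℕ) + 1) * b ^ r} : ℝ) /
        (b : ℝ) ^ r := by
  rw [KM_pow]
  simp only [KM, Matrix.of_apply, nat_div_eq_iff_mul_le_and_lt_mul (Nat.pow_pos hb), Nat.cast_pow]

/-- **The `r`-step transition probabilities of the multiplication-carries chain** (from
the proof of Proposition 8 of Diaconis–Fulman): started from carry `0`,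
`K_b^r(0,j) = (1/b^r)·#{0 ≤ x < b^r : j·b^r ≤ k·x < (j+1)·b^r}`. -/
theorem Kmat_power_entry (k b : ℕ) (hk : 1 ≤ k) (hb : 2 ≤ b) (r : ℕ) (j : Fin k) :
    (KM k b ^ r) ⟨0, hk⟩ j =
      (Nat.card {x : Fin (b ^ r) //
          (j : ℕ) * b ^ r ≤ k * (x : ℕ) ∧ k * (x : ℕ) < ((j : ℕ) + 1) * b ^ r} : ℝ) /
        (b : ℝ) ^ r := by
  simpa only [zero_add] using Kmat_power_entry_general k b (by omega) r ⟨0, hk⟩ j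
end

section
/- Fix integers b ≥ 2 and n ≥ 1. For all 0 ≤ i,j ≤ n−1, the number of n-tuples (x_1,…,x_n) ∈ {0,…,b−1}^n with jb ≤ i + x_1 + ⋯ + x_n ≤ (j+1)b − 1 equals the number of (n+1)-tuples (a_1,…,a_{n+1}) ∈ {0,…,b−1}^{n+1} with a_1 + ⋯ + a_{n+1} = (j+1)b − i − 1. Equivalently, the Holte carries matrix satisfies b^n·P_b(i,j) = [x^{(j+1)b−i−1}] ((1−x^b)/(1−x))^{n+1}, and hence (up to transposition, normalization and reindexing) coincides with the Brenti–Welker matrix governing r-th sections of rational generating functions. -/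
/-- Adjoining a slack variable: a value of `f` in the window `(k - b, k]` of length `b` is completed
to the sum `k` by exactly one digit `d < b`, namely `d = k - f x`. -/
def slackDigitEquiv {α : Type*} (b : ℕ) (f : α → ℤ) (k : ℤ) :
    {x : α // k - b < f x ∧ f x ≤ k} ≃ {p : Fin b × α // (p.1 : ℤ) + f p.2 = k} where
  toFun x := ⟨(⟨(k - f x).toNat, by have := x.2; omega⟩, x), by have := x.2; dsimp only; omega⟩
  invFun p := ⟨p.1.2, by have := p.2; omega⟩
  left_inv _ := rfl
  right_inv := by
    rintro ⟨⟨d, x⟩, hd⟩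
    ext
    · simp only at hd ⊢
      omega
    · rfl

theorem card_sum_mem_Ioc_eq_card_sum_eq (b n : ℕ) (k : ℤ) :
    Nat.card {x : Fin n → Fin b // k - b < ∑ t, (x t : ℤ) ∧ ∑ t, (x t : ℤ) ≤ k} =
      Nat.card {a : Fin (n + 1) → Fin b // ∑ t, (a t : ℤ) = k} :=
  Nat.card_congr <| (slackDigitEquiv b (fun x : Fin n → Fin b ↦ ∑ t, (x t : ℤ)) k).trans <|
    (Fin.consEquiv fun _ ↦ Fin b).subtypeEquiv fun p ↦ by
      simp [Fin.consEquiv, Fin.sum_univ_succ]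

theorem card_carry_eq_card_sum_eq (b n : ℕ) (hb : 0 < b) (i j : ℕ) :
    Nat.card {x : Fin n → Fin b //
        j * b ≤ i + ∑ t, (x t : ℕ) ∧ i + ∑ t, (x t : ℕ) ≤ (j + 1) * b - 1} =
      Nat.card {a : Fin (n + 1) → Fin b //
        (∑ t, ((a t : ℕ) : ℤ)) = ((j : ℤ) + 1) * b - i - 1} := by
  rw [← card_sum_mem_Ioc_eq_card_sum_eq]
  refine Nat.card_congr (Equiv.subtypeEquivRight fun x ↦ ?_)
  rw [← Nat.cast_sum, add_one_mul, add_one_mul]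
  omega

section GeneratingFunction

open Polynomial

variable (R : Type*) [CommSemiring R] (b N : ℕ)

theorem coeff_geom_sum_pow (m : ℕ) :
    ((∑ s ∈ Finset.range b, (X : R[X]) ^ s) ^ N).coeff m =
      Nat.card {a : Fin N → Fin b // ∑ t, (a t : ℕ) = m} := by
  rw [Finset.sum_range, Fintype.sum_pow, Nat.card_eq_fintype_card, Fintype.card_subtype]
  simp only [Finset.prod_pow_eq_pow_sum, finsetSum_coeff, coeff_X_pow, Finset.sum_boole, eq_comm]

theorem card_sum_eq_ite_coeff_geom_sum_pow (k : ℤ) :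
    (Nat.card {a : Fin N → Fin b // ∑ t, (a t : ℤ) = k} : R) =
      if 0 ≤ k then ((∑ s ∈ Finset.range b, (X : R[X]) ^ s) ^ N).coeff k.toNat else 0 := by
  split_ifs with hk
  · lift k to ℕ using hk
    simp only [coeff_geom_sum_pow, Int.toNat_natCast, ← Nat.cast_sum, Nat.cast_inj]
  · have no_tuple : IsEmpty {a : Fin N → Fin b // ∑ t, (a t : ℤ) = k} :=
      ⟨fun a ↦ hk (a.2 ▸ by positivity)⟩
    rw [Nat.card_of_isEmpty, Nat.cast_zero]

end GeneratingFunction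

open Polynomial in
theorem holte_eq_brenti_welker_general (b n : ℕ) (hb : 0 < b) (i j : ℕ) :
    (Nat.card {x : Fin n → Fin b //
        j * b ≤ i + ∑ t, (x t : ℕ) ∧ i + ∑ t, (x t : ℕ) ≤ (j + 1) * b - 1} =
      Nat.card {a : Fin (n + 1) → Fin b //
        (∑ t, ((a t : ℕ) : ℤ)) = ((j : ℤ) + 1) * b - i - 1}) ∧
    ((b : ℝ) ^ n * Pmat b n i j =
      if i + 1 ≤ (j + 1) * b then
        ((∑ s ∈ Finset.range b, (X : ℝ[X]) ^ s) ^ (n + 1)).coeff ((j + 1) * b - i - 1)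
      else 0) := by
  refine ⟨card_carry_eq_card_sum_eq b n hb i j, ?_⟩
  have base_pow_ne_zero : (b : ℝ) ^ n ≠ 0 := by positivity
  have target_cast : ((j : ℤ) + 1) * b = ((j + 1) * b : ℕ) := by push_cast; rfl
  have target_nonneg : 0 ≤ ((j : ℤ) + 1) * b - i - 1 ↔ i + 1 ≤ (j + 1) * b := by omega
  have target_toNat : (((j : ℤ) + 1) * b - i - 1).toNat = (j + 1) * b - i - 1 := by omega
  rw [Pmat, mul_div_cancel₀ _ base_pow_ne_zero, card_carry_eq_card_sum_eq b n hb,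
    card_sum_eq_ite_coeff_geom_sum_pow, target_toNat]
  simp only [target_nonneg]

open Polynomial in
/-- **The Holte carries matrix and the Brenti–Welker matrix** (Section 5.1 of
Diaconis–Fulman): the number of `n`-tuples of digits `x ∈ {0,…,b−1}^n` with
`jb ≤ i + Σ x_t ≤ (j+1)b − 1` equals the number of `(n+1)`-tuples
`a ∈ {0,…,b−1}^{n+1}` with `Σ a_t = (j+1)b − i − 1`; equivalently
`b^n·P_b(i,j) = [x^{(j+1)b−i−1}] ((1−x^b)/(1−x))^{n+1}` (a coefficient at a negative
power being `0`). -/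
theorem holte_eq_brenti_welker (b n : ℕ) (hb : 2 ≤ b) (hn : 1 ≤ n)
    (i j : ℕ) (hi : i < n) (hj : j < n) :
    (Nat.card {x : Fin n → Fin b //
        j * b ≤ i + ∑ t, (x t : ℕ) ∧ i + ∑ t, (x t : ℕ) ≤ (j + 1) * b - 1} =
      Nat.card {a : Fin (n + 1) → Fin b //
        (∑ t, ((a t : ℕ) : ℤ)) = ((j : ℤ) + 1) * b - i - 1}) ∧
    ((b : ℝ) ^ n * Pmat b n i j =
      if i + 1 ≤ (j + 1) * b then
        ((∑ s ∈ Finset.range b, (X : ℝ[X]) ^ s) ^ (n + 1)).coeff ((j + 1) * b - i - 1)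
      else 0) :=
  holte_eq_brenti_welker_general b n (by omega) i j
end
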